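/- arXiv:1212.6825 — 2 statements merged into one kernel-verified Lean document; each statement's English description precedes it below -/
import Mathlib

section
/- Let n = ∏_{j=1}^k p_j^{a_j} be the standard factorization of n into distinct primes, let ω ∈ (ℤ/nℤ)^×, r ∈ ℤ/nℤ, and X = ⟨ω⟩r. For each j let ψ_j : ℤ/nℤ → ℤ/p_j^{a_j}ℤ be the natural ring homomorphism, let x_j ∈ ℤ/p_j^{a_j}ℤ be the multiplicative inverse of n/p_j^{a_j} modulo p_j^{a_j}, and let X_j = ⟨ψ_j(ω)⟩·(x_j ψ_j(r)). If the orbit sizes |X_1|, …, |X_k| are pairwise coprime, then σ_X(y) = ∏_{j=1}^k σ_{X_j}(ψ_j(y)) for every y ∈ ℤ/nℤ. -/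
open Complex

/-- `e(θ) = exp(2πiθ)`. -/
noncomputable def e2 (θ : ℝ) : ℂ := Complex.exp (2 * Real.pi * Complex.I * θ)

/-- The cyclic supercharacter attached to a subset `X` of `ℤ/nℤ`:
`σ_X(y) = Σ_{x ∈ X} e(xy/n)`. -/
noncomputable def superchar (n : ℕ) (X : Set (ZMod n)) (y : ZMod n) : ℂ :=
  ∑ᶠ x ∈ X, e2 (((x.val * y.val : ℕ) : ℝ) / (n : ℝ))

/-- The orbit `Ar = {ar : a ∈ A}` of `r` under a unit subgroup `A`. -/
def unitOrbit (n : ℕ) (A : Subgroup (ZMod n)ˣ) (r : ZMod n) : Set (ZMod n) :=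
  (fun a : (ZMod n)ˣ => (a : ZMod n) * r) '' (A : Set (ZMod n)ˣ)



theorem aux_e2 (n : ℕ) [NeZero n] (x y : ZMod n) :
    e2 (((x.val * y.val : ℕ) : ℝ) / (n : ℝ)) = ZMod.stdAddChar (x * y) := by
  have h : x * y = (((x.val * y.val : ℕ) : ℤ) : ZMod n) := by
    simp
  rw [h, ZMod.stdAddChar_coe, e2]
  congr 1
  push_cast
  ring

theorem aux_superchar (n : ℕ) [NeZero n] (X : Set (ZMod n)) (y : ZMod n) :
    superchar n X y = ∑ x ∈ X.toFinite.toFinset, (ZMod.stdAddChar (x * y) : ℂ) := by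
  unfold superchar
  rw [finsum_mem_eq_finite_toFinset_sum _ X.toFinite]
  exact Finset.sum_congr rfl fun x _ => aux_e2 n x y

theorem aux_zero (n k : ℕ) [NeZero n] (q : Fin k → ℕ)
    (hq : Pairwise fun i j => Nat.Coprime (q i) (q j))
    (hfac : n = ∏ j, q j) (hdvd : ∀ j, q j ∣ n) (z : ZMod n)
    (hz : ∀ j, ZMod.castHom (hdvd j) (ZMod (q j)) z = 0) : z = 0 := by
  have h1 : ∀ j, q j ∣ z.val := by
    intro j
    rw [← ZMod.natCast_eq_zero_iff]
    have := hz j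
    rw [← ZMod.natCast_zmod_val z, map_natCast] at this
    exact this
  have h2 : n ∣ z.val := by
    refine hfac.dvd.trans ?_
    refine Fintype.prod_dvd_of_isRelPrime ?_ h1
    intro i j hij
    exact Nat.coprime_iff_isRelPrime.mp (hq hij)
  rw [← ZMod.natCast_zmod_val z]
  exact (ZMod.natCast_eq_zero_iff _ _).2 h2

theorem aux_char (n k : ℕ) [NeZero n] (q : Fin k → ℕ) [∀ j, NeZero (q j)]
    (hq : Pairwise fun i j => Nat.Coprime (q i) (q j))
    (hfac : n = ∏ j, q j) (hdvd : ∀ j, q j ∣ n)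
    (x : ∀ j, ZMod (q j))
    (hx : ∀ j, x j * ((n / q j : ℕ) : ZMod (q j)) = 1) (z : ZMod n) :
    (ZMod.stdAddChar z : ℂ)
      = ∏ j, ZMod.stdAddChar (x j * ZMod.castHom (hdvd j) (ZMod (q j)) z) := by
  have h1 : (∑ j, (((x j).val * (n / q j) : ℕ) : ZMod n)) = 1 := by
    rw [← sub_eq_zero]
    refine aux_zero n k q hq hfac hdvd _ fun i => ?_
    rw [map_sub, map_sum, map_one, sub_eq_zero, Finset.sum_eq_single i]
    · rw [map_natCast]; push_cast; rw [ZMod.natCast_zmod_val]; exact hx i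
    · intro j _ hji
      rw [map_natCast, ZMod.natCast_eq_zero_iff]
      refine Dvd.dvd.mul_left ?_ _
      refine (hq hji.symm).dvd_of_dvd_mul_left (n := n / q j) (m := q j) ?_
      rw [Nat.mul_div_cancel' (hdvd j)]
      exact hdvd i
    · simp
  have h2 : z = ∑ j, (((z.val * ((x j).val * (n / q j)) : ℕ) : ℤ) : ZMod n) := by
    conv_lhs => rw [← mul_one z, ← h1, Finset.mul_sum]
    refine Finset.sum_congr rfl fun j _ => ?_
    rw [Int.cast_natCast, Nat.cast_mul z.val, ZMod.natCast_zmod_val z]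
  conv_lhs => rw [h2]
  have hs : ∀ f : Fin k → ZMod n, (ZMod.stdAddChar (∑ j, f j) : ℂ)
      = ∏ j, ZMod.stdAddChar (f j) := by
    intro f
    exact map_prod (ZMod.stdAddChar (N := n)).toMonoidHom (fun j => Multiplicative.ofAdd (f j)) _
  rw [hs]
  refine Finset.prod_congr rfl fun j _ => ?_
  have h3 : x j * ZMod.castHom (hdvd j) (ZMod (q j)) z
      = ((((x j).val * z.val : ℕ) : ℤ) : ZMod (q j)) := by
    conv_lhs => rw [← ZMod.natCast_zmod_val z, map_natCast]
    push_cast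
    rw [ZMod.natCast_zmod_val]
  rw [h3, ZMod.stdAddChar_coe, ZMod.stdAddChar_coe]
  congr 1
  have hn0 : (n : ℂ) ≠ 0 := by exact_mod_cast NeZero.ne n
  have hq0 : (q j : ℂ) ≠ 0 := by exact_mod_cast NeZero.ne (q j)
  obtain ⟨c, hc⟩ := hdvd j
  have hd : n / q j = c := by
    rw [hc]
    exact Nat.mul_div_cancel_left _ (Nat.pos_of_ne_zero (NeZero.ne (q j)))
  have hc2 : (n : ℂ) = q j * c := by exact_mod_cast hc
  rw [hd]
  push_cast
  rw [div_eq_div_iff hn0 hq0, hc2]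
  ring

theorem aux_orbit (n : ℕ) [NeZero n] (u : (ZMod n)ˣ) (s : ZMod n) (m m' : ℤ)
    (h : m ≡ m' [ZMOD (unitOrbit n (Subgroup.zpowers u) s).ncard]) :
    ((u ^ m : (ZMod n)ˣ) : ZMod n) * s = ((u ^ m' : (ZMod n)ˣ) : ZMod n) * s := by
  have h1 : unitOrbit n (Subgroup.zpowers u) s = MulAction.orbit (Subgroup.zpowers u) s := by
    ext t
    simp only [unitOrbit, Set.mem_image, MulAction.mem_orbit_iff, SetLike.mem_coe]
    constructor
    · rintro ⟨a, ha, rfl⟩; exact ⟨⟨a, ha⟩, rfl⟩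
    · rintro ⟨⟨a, ha⟩, rfl⟩; exact ⟨a, ha, rfl⟩
  classical
  haveI : Fintype (MulAction.orbit (Subgroup.zpowers u) s) := Fintype.ofFinite _
  have h2 : Function.minimalPeriod (u • ·) s = (unitOrbit n (Subgroup.zpowers u) s).ncard := by
    rw [MulAction.minimalPeriod_eq_card, h1, ← Nat.card_eq_fintype_card]
    rfl
  have h3 : ∀ m : ℤ, ((u ^ m : (ZMod n)ˣ) : ZMod n) * s = (u ^ m : (ZMod n)ˣ) • s := fun _ => rfl
  rw [h3, h3, ← MulAction.zpow_smul_mod_minimalPeriod u s m,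
    ← MulAction.zpow_smul_mod_minimalPeriod u s m', h2, h]

theorem aux_crt (k : ℕ) (N : Fin k → ℕ) (hN : ∀ j, N j ≠ 0)
    (hc : ∀ i j, i ≠ j → Nat.Coprime (N i) (N j)) (m : Fin k → ℤ) :
    ∃ M : ℤ, ∀ j, M ≡ m j [ZMOD N j] := by
  obtain ⟨M, hM⟩ := Nat.chineseRemainderOfFinset (fun j => (m j % N j).toNat) N Finset.univ
    (fun j _ => hN j) (fun i _ j _ hij => hc i j hij)
  refine ⟨M, fun j => ?_⟩
  have h := Int.natCast_modEq_iff.2 (hM j (Finset.mem_univ _))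
  have h0 : (0 : ℤ) ≤ m j % N j := Int.emod_nonneg _ (by exact_mod_cast hN j)
  simp only [Int.toNat_of_nonneg h0] at h
  exact h.trans (Int.mod_modEq _ _)

theorem aux_mem (n : ℕ) (u : (ZMod n)ˣ) (s t : ZMod n) :
    t ∈ unitOrbit n (Subgroup.zpowers u) s ↔ ∃ m : ℤ, ((u ^ m : (ZMod n)ˣ) : ZMod n) * s = t := by
  simp only [unitOrbit, Set.mem_image, SetLike.mem_coe, Subgroup.mem_zpowers_iff]
  constructor
  · rintro ⟨a, ⟨m, rfl⟩, rfl⟩; exact ⟨m, rfl⟩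
  · rintro ⟨m, rfl⟩; exact ⟨_, ⟨m, rfl⟩, rfl⟩

theorem stmt1 (n k : ℕ) (hn : 0 < n) (p : Fin k → ℕ) (a : Fin k → ℕ)
    (hp : ∀ j, (p j).Prime) (ha : ∀ j, 0 < a j) (hinj : Function.Injective p)
    (hfac : n = ∏ j, p j ^ a j)
    (hdvd : ∀ j, p j ^ a j ∣ n)
    (ω : (ZMod n)ˣ) (r : ZMod n)
    (x : ∀ j, ZMod (p j ^ a j))
    (hx : ∀ j, x j * ((n / p j ^ a j : ℕ) : ZMod (p j ^ a j)) = 1)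
    (X : ∀ j, Set (ZMod (p j ^ a j)))
    (hX : ∀ j, X j = unitOrbit (p j ^ a j)
      (Subgroup.zpowers (Units.map (ZMod.castHom (hdvd j) (ZMod (p j ^ a j))).toMonoidHom ω))
      (x j * (ZMod.castHom (hdvd j) (ZMod (p j ^ a j)) r)))
    (hcop : ∀ i j, i ≠ j → Nat.Coprime (X i).ncard (X j).ncard)
    (y : ZMod n) :
    superchar n (unitOrbit n (Subgroup.zpowers ω) r) y
      = ∏ j, superchar (p j ^ a j) (X j) (ZMod.castHom (hdvd j) (ZMod (p j ^ a j)) y) := by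
  classical
  haveI : NeZero n := ⟨hn.ne'⟩
  haveI : ∀ j, NeZero (p j ^ a j) := fun j => ⟨pow_ne_zero _ (hp j).ne_zero⟩
  have hq : Pairwise fun i j => Nat.Coprime (p i ^ a i) (p j ^ a j) := by
    intro i j hij
    exact Nat.Coprime.pow _ _ ((Nat.coprime_primes (hp i) (hp j)).2 (hinj.ne hij))
  have hmap : ∀ (j : Fin k) (m : ℤ) , (((Units.map
      (ZMod.castHom (hdvd j) (ZMod (p j ^ a j))).toMonoidHom ω) ^ m : (ZMod (p j ^ a j))ˣ) :
      ZMod (p j ^ a j)) = ZMod.castHom (hdvd j) (ZMod (p j ^ a j)) ((ω ^ m : (ZMod n)ˣ) : ZMod n) := by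
    intro j m
    rw [← map_zpow]
    rfl
  rw [aux_superchar]
  simp only [aux_superchar]
  rw [Finset.prod_univ_sum]
  refine Finset.sum_bij
    (fun z _ j => x j * ZMod.castHom (hdvd j) (ZMod (p j ^ a j)) z) ?_ ?_ ?_ ?_
  · intro z hz
    rw [Set.Finite.mem_toFinset, aux_mem] at hz
    obtain ⟨m, rfl⟩ := hz
    rw [Fintype.mem_piFinset]
    intro j
    rw [Set.Finite.mem_toFinset, hX, aux_mem]
    refine ⟨m, ?_⟩
    rw [hmap, map_mul]
    ring
  · intro z _ z' _ h
    rw [← sub_eq_zero]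
    refine aux_zero n k _ hq hfac hdvd _ fun j => ?_
    have h1 := congrFun h j
    have h2 : IsUnit (x j) := IsUnit.of_mul_eq_one _ (hx j)
    rw [map_sub, h2.mul_left_cancel h1, sub_self]
  · intro b hb
    rw [Fintype.mem_piFinset] at hb
    have hb' : ∀ j, ∃ m : ℤ, (((Units.map
      (ZMod.castHom (hdvd j) (ZMod (p j ^ a j))).toMonoidHom ω) ^ m : (ZMod (p j ^ a j))ˣ) :
      ZMod (p j ^ a j)) * (x j * (ZMod.castHom (hdvd j) (ZMod (p j ^ a j)) r)) = b j := by
      intro j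
      have h := hb j
      rwa [Set.Finite.mem_toFinset, hX, aux_mem] at h
    choose m hm using hb'
    obtain ⟨M, hM⟩ := aux_crt k (fun j => (X j).ncard) (fun j => by
      have h := hb j
      rw [Set.Finite.mem_toFinset] at h
      exact Set.ncard_ne_zero_of_mem h) hcop m
    refine ⟨((ω ^ M : (ZMod n)ˣ) : ZMod n) * r, ?_, ?_⟩
    · rw [Set.Finite.mem_toFinset, aux_mem]
      exact ⟨M, rfl⟩
    · funext j
      have h := hM j
      simp only [hX j] at h
      rw [← hm j, ← aux_orbit _ _ _ _ _ h, hmap, map_mul]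
      ring
  · intro z _
    rw [aux_char n k _ hq hfac hdvd x hx]
    refine Finset.prod_congr rfl fun j _ => ?_
    rw [map_mul (ZMod.castHom (hdvd j) (ZMod (p j ^ a j))), mul_assoc]
end

section
/- Fix a positive integer d, and define g : 𝕋^{φ(d)} → ℂ by g(z_1,…,z_{φ(d)}) = Σ_{k=0}^{d−1} ∏_{j=0}^{φ(d)−1} z_{j+1}^{b_{k,j}}, where 𝕋 is the unit circle and the integers b_{k,j} are determined by t^k ≡ Σ_{j=0}^{φ(d)−1} b_{k,j} t^j (mod Φ_d(t)) in ℤ[t]. Then for every ε > 0 there exists an odd prime power q = p^a with d dividing p−1 such that, letting A be the unique subgroup of order d of the cyclic group (ℤ/qℤ)^× and X = A·1, every point of the image of g lies within distance ε of some value σ_X(y), y ∈ ℤ/qℤ; i.e., every open ball of radius ε centered at a point of the image of g has nonempty intersection with the image of σ_X. -/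
open Complex

lemma e2_congr (q : ℕ) (hq : 0 < q) (m n : ℤ) (h : (m : ZMod q) = n) :
    e2 ((m : ℝ) / q) = e2 ((n : ℝ) / q) := by
  rw [ZMod.intCast_eq_intCast_iff, Int.modEq_iff_dvd] at h
  obtain ⟨c, hc⟩ := h
  have hn : n = m + q * c := by linarith
  have hq' : (q : ℂ) ≠ 0 := by exact_mod_cast hq.ne'
  unfold e2
  rw [Complex.exp_eq_exp_iff_exists_int]
  refine ⟨-c, ?_⟩
  subst hn
  push_cast
  field_simp
  ring

lemma e2_lip (s t : ℝ) : ‖e2 s - e2 t‖ ≤ 2 * Real.pi * |s - t| := by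
  have h : e2 s - e2 t = e2 t * (Complex.exp (Complex.I * ((2 * Real.pi * (s - t) : ℝ) : ℂ)) - 1) := by
    unfold e2
    rw [mul_sub, ← Complex.exp_add, mul_one]
    congr 2
    push_cast
    ring
  have h1 : ‖e2 t‖ = 1 := by
    unfold e2
    have : (2 * Real.pi * Complex.I * t : ℂ) = ((2 * Real.pi * t : ℝ) : ℂ) * Complex.I := by
      push_cast; ring
    rw [this, Complex.norm_exp_ofReal_mul_I]
  rw [h, norm_mul, h1, one_mul]
  refine (Real.norm_exp_I_mul_ofReal_sub_one_le).trans ?_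
  rw [Real.norm_eq_abs, abs_mul, abs_of_pos Real.two_pi_pos]

lemma e2_sum {n : ℕ} (θ : Fin n → ℝ) (b : Fin n → ℤ) :
    ∏ j, e2 (θ j) ^ b j = e2 (∑ j, (b j : ℝ) * θ j) := by
  unfold e2
  push_cast
  rw [Finset.mul_sum, Complex.exp_sum]
  refine Finset.prod_congr rfl fun j _ => ?_
  rw [← Complex.exp_int_mul]
  congr 1
  ring

lemma exists_e2 (z : ℂ) (hz : ‖z‖ = 1) : ∃ θ : ℝ, z = e2 θ := by
  refine ⟨z.arg / (2 * Real.pi), ?_⟩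
  have h := Complex.norm_mul_exp_arg_mul_I z
  rw [hz] at h
  unfold e2
  have : (Real.pi : ℂ) ≠ 0 := by exact_mod_cast Real.pi_ne_zero
  rw [Complex.ofReal_one, one_mul] at h
  refine h.symm.trans ?_
  congr 1
  push_cast
  field_simp

lemma exists_gen (q d : ℕ) [Fact q.Prime] (hd : 0 < d) (A : Subgroup (ZMod q)ˣ)
    (hA : Nat.card A = d) : ∃ w : ZMod q, IsPrimitiveRoot w d ∧
      ∀ y : ZMod q, superchar q (unitOrbit q A 1) y =
        ∑ k : Fin d, e2 ((((w ^ (k : ℕ)).val * y.val : ℕ) : ℝ) / q) := by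
  obtain ⟨g, hg⟩ := IsCyclic.exists_generator (α := A)
  have hgo : orderOf g = d := by rw [orderOf_eq_card_of_forall_mem_zpowers hg, hA]
  have hprimg : IsPrimitiveRoot g d := hgo ▸ IsPrimitiveRoot.orderOf g
  have hprim : IsPrimitiveRoot (((g : (ZMod q)ˣ)) : ZMod q) d := by
    rw [IsPrimitiveRoot.coe_units_iff, IsPrimitiveRoot.coe_submonoidClass_iff]
    exact hprimg
  refine ⟨_, hprim, fun y => ?_⟩
  have himg : unitOrbit q A 1 =
      ((Finset.univ.image (fun k : Fin d => (((g : (ZMod q)ˣ)) : ZMod q) ^ (k : ℕ)) :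
        Finset (ZMod q)) : Set (ZMod q)) := by
    ext x
    simp only [unitOrbit, mul_one, Set.mem_image, SetLike.mem_coe, Finset.coe_image,
      Finset.coe_univ, Set.image_univ, Set.mem_range]
    constructor
    · rintro ⟨a, ha, rfl⟩
      have h1 : (⟨a, ha⟩ : A) ∈ Submonoid.powers g := by
        rw [mem_powers_iff_mem_zpowers]
        exact hg _
      obtain ⟨m, hm⟩ := h1
      refine ⟨⟨m % d, Nat.mod_lt _ hd⟩, ?_⟩
      have hm2 : (g : (ZMod q)ˣ) ^ m = a := by
        have := congrArg (Subtype.val) hm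
        simpa using this
      have : g ^ (m % d) = g ^ m := by rw [← hgo, pow_mod_orderOf]
      have h3 : (g : (ZMod q)ˣ) ^ (m % d) = (g : (ZMod q)ˣ) ^ m := by exact_mod_cast this
      rw [← hm2, ← h3]
      simp
    · rintro ⟨k, rfl⟩
      exact ⟨(g : (ZMod q)ˣ) ^ (k : ℕ), A.pow_mem g.2 _, by simp⟩
  unfold superchar
  rw [himg, finsum_mem_coe_finset, Finset.sum_image]
  intro i _ j _ hij
  exact Fin.ext (hprim.pow_inj i.2 j.2 hij)

lemma pigeon (q n M : ℕ) [Fact q.Prime] (hM : 0 < M) (hq : M ^ n < q) (w : ZMod q) :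
    ∃ (y : ZMod q) (a : Fin n → ℤ), y ≠ 0 ∧ (∀ j, (a j : ZMod q) = y * w ^ (j : ℕ)) ∧
      ∀ j, |a j| * M ≤ q := by
  have hq0 : 0 < q := (Fact.out : q.Prime).pos
  have hlt : ∀ y : ZMod q, y.val * M / q < M := fun y => by
    rw [Nat.div_lt_iff_lt_mul hq0, mul_comm]
    exact Nat.mul_lt_mul_of_pos_left (ZMod.val_lt y) hM
  let f : ZMod q → (Fin n → Fin M) := fun y j => ⟨(y * w ^ (j : ℕ)).val * M / q, hlt _⟩
  obtain ⟨y1, y2, hne, hf⟩ := Fintype.exists_ne_map_eq_of_card_lt f (by simpa [ZMod.card] using hq)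
  refine ⟨y1 - y2, fun j => ((y1 * w ^ (j : ℕ)).val : ℤ) - ((y2 * w ^ (j : ℕ)).val : ℤ),
    sub_ne_zero.2 hne, fun j => ?_, fun j => ?_⟩
  · push_cast
    rw [ZMod.natCast_val, ZMod.natCast_val, ZMod.cast_id, ZMod.cast_id]
    ring
  · have h := congrArg Fin.val (congrFun hf j)
    simp only [f] at h
    set u := (y1 * w ^ (j : ℕ)).val
    set v := (y2 * w ^ (j : ℕ)).val
    have h1 := Nat.div_add_mod (u * M) q
    have h2 := Nat.div_add_mod (v * M) q
    have h3 := Nat.mod_lt (u * M) hq0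
    have h4 := Nat.mod_lt (v * M) hq0
    rw [h] at h1
    have hM' : (M : ℤ) = |(M : ℤ)| := by simp
    rw [hM', ← abs_mul, sub_mul, abs_le]
    zify at h1 h2 h3 h4
    constructor
    · have : (0:ℤ) ≤ (u * M) % q := Int.emod_nonneg _ (by omega)
      linarith
    · have : (0:ℤ) ≤ (v * M) % q := Int.emod_nonneg _ (by omega)
      linarith

/-- coordinates of `X^k` modulo the cyclotomic polynomial -/
noncomputable def Bc (d k j : ℕ) : ℤ :=
  ((Polynomial.X : Polynomial ℤ) ^ k %ₘ Polynomial.cyclotomic d ℤ).coeff j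

open Polynomial in
lemma deg_mod (R : Type*) [CommRing R] [Nontrivial R] (d : ℕ) (hd : 0 < d) (f : R[X]) :
    f %ₘ cyclotomic d R = ∑ j : Fin d.totient, C ((f %ₘ cyclotomic d R).coeff j) * X ^ (j : ℕ) := by
  rw [Fin.sum_univ_eq_sum_range (fun j => C ((f %ₘ cyclotomic d R).coeff j) * X ^ j)]
  apply Polynomial.as_sum_range_C_mul_X_pow'
  conv_rhs => rw [← natDegree_cyclotomic d R]
  refine natDegree_modByMonic_lt _ (cyclotomic.monic d R) ?_
  intro h
  have := congrArg natDegree h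
  rw [natDegree_cyclotomic, natDegree_one] at this
  exact (Nat.totient_pos.2 hd).ne' this

open Polynomial in
lemma Bc_eval (q d : ℕ) [Fact q.Prime] (hd : 0 < d) (w : ZMod q) (hw : IsPrimitiveRoot w d)
    (k : ℕ) : w ^ k = ∑ j : Fin d.totient, (Bc d k j : ZMod q) * w ^ (j : ℕ) := by
  have h0 : aeval w (cyclotomic d ℤ) = 0 := by
    have := hw.isRoot_cyclotomic hd
    rw [IsRoot.def, ← map_cyclotomic_int, eval_map] at this
    simpa [aeval_def] using this
  have h1 : aeval w ((X : ℤ[X]) ^ k) = aeval w ((X : ℤ[X]) ^ k %ₘ cyclotomic d ℤ) := by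
    conv_lhs => rw [← modByMonic_add_div ((X : ℤ[X]) ^ k) (cyclotomic d ℤ)]
    simp [h0]
  rw [deg_mod ℤ d hd] at h1
  simpa [Bc] using h1

open Polynomial in
lemma hankel (d : ℕ) (hd : 0 < d) (a : Fin d.totient → ℤ) (ha : a ≠ 0) :
    (Matrix.of fun i j : Fin d.totient => ∑ l : Fin d.totient, Bc d (i + j) l * a l).det ≠ 0 := by
  intro hdet
  set Φ := cyclotomic d ℚ with hΦ
  have hmon : Φ.Monic := cyclotomic.monic d ℚ
  let L : ℚ[X] →ₗ[ℚ] ℚ := ∑ l : Fin d.totient, (a l : ℚ) • ((lcoeff ℚ l) ∘ₗ (modByMonicHom Φ))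
  have hL : ∀ f, L f = ∑ l : Fin d.totient, (a l : ℚ) * (f %ₘ Φ).coeff l := by
    intro f
    simp [L, modByMonicHom, LinearMap.sum_apply]
  have hLX : ∀ k, L (X ^ k) = ∑ l : Fin d.totient, (Bc d k l : ℚ) * a l := by
    intro k
    rw [hL]
    refine Finset.sum_congr rfl fun l _ => ?_
    rw [mul_comm]
    congr 1
    have : (X ^ k %ₘ Φ : ℚ[X]) = ((X : ℤ[X]) ^ k %ₘ cyclotomic d ℤ).map (Int.castRingHom ℚ) := by
      rw [map_modByMonic _ (cyclotomic.monic d ℤ), map_cyclotomic]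
      simp [hΦ]
    rw [this, coeff_map]
    simp [Bc]
  have hLmod : ∀ f g, f %ₘ Φ = g %ₘ Φ → L f = L g := fun f g h => by rw [hL, hL, h]
  have hLmul : ∀ f g, L (f + Φ * g) = L f := fun f g => by
    apply hLmod
    rw [add_modByMonic, (modByMonic_eq_zero_iff_dvd hmon).2 (dvd_mul_right _ _), add_zero]
  have hdetQ : ((Matrix.of fun i j : Fin d.totient =>
      ∑ l : Fin d.totient, Bc d (i + j) l * a l).map (Int.castRingHom ℚ)).det = 0 := by
    rw [← RingHom.mapMatrix_apply, ← RingHom.map_det, hdet, map_zero]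
  obtain ⟨r, hr0, hr⟩ := Matrix.exists_vecMul_eq_zero_iff.2 hdetQ
  set R : ℚ[X] := ∑ i : Fin d.totient, C (r i) * X ^ (i : ℕ) with hR
  have hRc : ∀ i : Fin d.totient, R.coeff i = r i := by
    intro i
    simp [hR, coeff_X_pow, Fin.val_inj]
  have hRne : R ≠ 0 := by
    intro h
    apply hr0
    ext i
    rw [← hRc, h]; simp
  have hRdeg : R.degree < Φ.degree := by
    rw [hΦ, degree_cyclotomic]
    refine (degree_sum_le _ _).trans_lt ?_
    rw [Finset.sup_lt_iff (by exact WithBot.bot_lt_coe _)]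
    intro i _
    refine (degree_C_mul_X_pow_le _ _).trans_lt ?_
    exact_mod_cast i.2
  have hRX : ∀ j : Fin d.totient, L (R * X ^ (j : ℕ)) = 0 := by
    intro j
    have h := congrFun hr j
    simp only [Matrix.vecMul, dotProduct, Matrix.map_apply, Matrix.of_apply, Pi.zero_apply] at h
    rw [hR, Finset.sum_mul, map_sum, ← h]
    refine Finset.sum_congr rfl fun i _ => ?_
    rw [mul_assoc, ← pow_add, ← smul_eq_C_mul, map_smul, hLX]
    simp
  have hRf : ∀ f, L (R * f) = 0 := by
    intro f
    have h1 : R * f = R * (f %ₘ Φ) + Φ * (R * (f /ₘ Φ)) := by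
      conv_lhs => rw [← modByMonic_add_div f Φ]
      ring
    rw [h1, hLmul, hΦ, deg_mod ℚ d hd, Finset.mul_sum, map_sum]
    refine Finset.sum_eq_zero fun j _ => ?_
    rw [mul_left_comm, ← smul_eq_C_mul, map_smul, hRX, smul_zero]
  have hirr : Irreducible Φ := cyclotomic.irreducible_rat hd
  have hcop : IsCoprime Φ R := by
    rw [hirr.coprime_iff_not_dvd]
    exact fun h => (not_lt.2 (degree_le_of_dvd h hRne)) hRdeg
  obtain ⟨u, v, huv⟩ := hcop
  apply ha
  ext j
  have h1 : (X : ℚ[X]) ^ (j : ℕ) = R * (v * X ^ (j : ℕ)) + Φ * (u * X ^ (j : ℕ)) := by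
    linear_combination (-(X : ℚ[X]) ^ (j : ℕ)) * huv
  have h2 : L (X ^ (j : ℕ)) = 0 := by rw [h1, hLmul, hRf]
  rw [hL, (modByMonic_eq_self_iff hmon).2] at h2
  · simpa [coeff_X_pow, Fin.val_inj] using h2
  · rw [degree_X_pow, hΦ, degree_cyclotomic]
    exact_mod_cast j.2

lemma main_approx (d q M : ℕ) (hd : 0 < d) [Fact q.Prime] (hM : 0 < M)
    (hq : M ^ d.totient < q) (w : ZMod q) (hw : IsPrimitiveRoot w d)
    (K : ℝ) (hK : ∀ i j : Fin d.totient, ∑ l : Fin d.totient, |(Bc d (i + j) l : ℝ)| ≤ K)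
    (θ : Fin d.totient → ℝ) :
    ∃ (y : ZMod q) (N : Fin d.totient → ℤ), (∀ j, (N j : ZMod q) = w ^ (j : ℕ) * y) ∧
      ∀ j, |θ j - (N j : ℝ) / q| ≤ d.totient * K / M := by
  have hq0 : (0 : ℝ) < q := by exact_mod_cast (Fact.out : q.Prime).pos
  have hM0 : (0 : ℝ) < M := by exact_mod_cast hM
  obtain ⟨y0, a, hy0, ha, hab⟩ := pigeon q d.totient M hM hq w
  have ha0 : a ≠ 0 := by
    intro h
    have h1 := ha ⟨0, Nat.totient_pos.2 hd⟩
    rw [h] at h1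
    simp at h1
    exact hy0 h1.symm
  have hdet := hankel d hd a ha0
  set H : Matrix (Fin d.totient) (Fin d.totient) ℤ :=
    Matrix.of fun i j : Fin d.totient => ∑ l : Fin d.totient, Bc d (i + j) l * a l with hH
  have hdetR : (H.map (Int.castRingHom ℝ)).det ≠ 0 := by
    rw [← RingHom.mapMatrix_apply, ← RingHom.map_det]
    simpa using hdet
  have hHw : ∀ i j, (H i j : ZMod q) = y0 * w ^ (i + j : ℕ) := by
    intro i j
    rw [Bc_eval q d hd w hw, Finset.mul_sum]
    simp only [hH, Matrix.of_apply]
    push_cast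
    refine Finset.sum_congr rfl fun l _ => ?_
    rw [ha]; ring
  have hHb : ∀ i j, |(H i j : ℝ)| ≤ K * (q / M) := by
    intro i j
    simp only [hH, Matrix.of_apply]
    push_cast
    refine (Finset.abs_sum_le_sum_abs _ _).trans ?_
    refine le_trans ?_ (mul_le_mul_of_nonneg_right (hK i j) (by positivity))
    rw [Finset.sum_mul]
    refine Finset.sum_le_sum fun l _ => ?_
    rw [abs_mul]
    refine mul_le_mul_of_nonneg_left ?_ (abs_nonneg _)
    rw [le_div_iff₀ hM0]
    exact_mod_cast hab l
  obtain ⟨c, hc⟩ : ∃ c : Fin d.totient → ℝ,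
      Matrix.vecMul c (H.map (Int.castRingHom ℝ)) = fun j => q * θ j := by
    refine ⟨Matrix.vecMul (fun j => q * θ j) (H.map (Int.castRingHom ℝ))⁻¹, ?_⟩
    rw [Matrix.vecMul_vecMul, Matrix.nonsing_inv_mul _ (Ne.isUnit hdetR), Matrix.vecMul_one]
  refine ⟨∑ i : Fin d.totient, (⌊c i⌋ : ZMod q) * (y0 * w ^ (i : ℕ)),
    fun j => ∑ i, ⌊c i⌋ * H i j, fun j => ?_, fun j => ?_⟩
  · push_cast
    rw [Finset.mul_sum]
    refine Finset.sum_congr rfl fun i _ => ?_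
    rw [hHw, pow_add]; ring
  · have h := congrFun hc j
    simp only [Matrix.vecMul, dotProduct, Matrix.map_apply, eq_intCast] at h
    have h1 : θ j - ((∑ i, ⌊c i⌋ * H i j : ℤ) : ℝ) / q
        = (∑ i, Int.fract (c i) * (H i j : ℝ)) / q := by
      have h2 : (∑ i, Int.fract (c i) * (H i j : ℝ))
          = q * θ j - ((∑ i, ⌊c i⌋ * H i j : ℤ) : ℝ) := by
        rw [← h]
        push_cast
        rw [← Finset.sum_sub_distrib]
        refine Finset.sum_congr rfl fun i _ => ?_
        rw [Int.fract]; ring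
      rw [h2]
      field_simp
    rw [h1, abs_div, abs_of_pos hq0, div_le_iff₀ hq0]
    refine (Finset.abs_sum_le_sum_abs _ _).trans ?_
    calc ∑ i, |Int.fract (c i) * (H i j : ℝ)| ≤ ∑ i : Fin d.totient, K * (q / M) := by
          refine Finset.sum_le_sum fun i _ => ?_
          rw [abs_mul, abs_of_nonneg (Int.fract_nonneg _)]
          refine le_trans ?_ (hHb i j)
          exact mul_le_of_le_one_left (abs_nonneg _) (Int.fract_lt_one _).le
      _ = d.totient * K / M * q := by
          simp
          ring

lemma exists_K_aux (n : ℕ) (F : Fin n → Fin n → ℝ) (hF : ∀ i j, 0 ≤ F i j) :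
    ∃ K : ℝ, 0 ≤ K ∧ ∀ i j, F i j ≤ K := by
  refine ⟨∑ i, ∑ j, F i j, Finset.sum_nonneg fun i _ => Finset.sum_nonneg fun j _ => hF i j,
    fun i j => ?_⟩
  refine (Finset.single_le_sum (f := F i) (fun j _ => hF i j) (Finset.mem_univ j)).trans ?_
  exact Finset.single_le_sum (f := fun i => ∑ j, F i j)
    (fun i _ => Finset.sum_nonneg fun j _ => hF i j) (Finset.mem_univ i)

lemma exists_K (d : ℕ) : ∃ K : ℝ, 0 ≤ K ∧
    ∀ i j : Fin d.totient, ∑ l : Fin d.totient, |(Bc d (i + j) l : ℝ)| ≤ K :=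
  exists_K_aux d.totient _ fun _ _ => Finset.sum_nonneg fun _ _ => abs_nonneg _

open Polynomial in
theorem stmt18 (d : ℕ) (hd : 0 < d)
    (b : Fin d → Fin (Nat.totient d) → ℤ)
    (hb : ∀ k : Fin d, (X : ℤ[X]) ^ (k : ℕ) %ₘ Polynomial.cyclotomic d ℤ
        = ∑ j : Fin (Nat.totient d), Polynomial.C (b k j) * (X : ℤ[X]) ^ (j : ℕ))
    (ε : ℝ) (hε : 0 < ε) :
    ∃ p e : ℕ, p.Prime ∧ Odd p ∧ 0 < e ∧ d ∣ p - 1 ∧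
      ∀ A : Subgroup (ZMod (p ^ e))ˣ, Nat.card A = d →
        ∀ z : Fin (Nat.totient d) → ℂ, (∀ j, ‖z j‖ = 1) →
          ∃ y : ZMod (p ^ e),
            ‖(∑ k : Fin d, ∏ j : Fin (Nat.totient d), z j ^ (b k j))
              - superchar (p ^ e) (unitOrbit (p ^ e) A 1) y‖ < ε := by
  have hbB : ∀ k j, b k j = Bc d k j := by
    intro k j
    simp [Bc, hb k, coeff_X_pow, Fin.val_inj]
  obtain ⟨K, hK0, hK⟩ := exists_K d
  set T : ℝ := ∑ k, 2 * Real.pi * ∑ j, |(b k j : ℝ)| * (d.totient * K) with hT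
  have hT0 : 0 ≤ T := by
    have hpi := Real.pi_pos
    rw [hT]
    positivity
  obtain ⟨M, hM⟩ := exists_nat_gt (T / ε)
  have hM0 : (0 : ℝ) < M := lt_of_le_of_lt (by positivity) hM
  have hMpos : 0 < M := by exact_mod_cast hM0
  obtain ⟨p, hp, hpgt, hmod⟩ := Nat.exists_prime_gt_modEq_one (M ^ d.totient + 2) hd.ne'
  refine ⟨p, 1, hp, hp.odd_of_ne_two (by omega), one_pos,
    (Nat.modEq_iff_dvd' hp.one_le).1 hmod.symm, ?_⟩
  have hq : (p ^ 1).Prime := by simpa using hp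
  have hlt : M ^ d.totient < p ^ 1 := by rw [pow_one]; omega
  generalize p ^ 1 = q at hq hlt
  have : Fact q.Prime := ⟨hq⟩
  intro A hA z hz
  obtain ⟨w, hw, hs⟩ := exists_gen q d hd A hA
  choose θ hθ using fun j => exists_e2 (z j) (hz j)
  obtain ⟨y, N, hN, hNb⟩ := main_approx d q M hd hMpos hlt w hw K hK θ
  refine ⟨y, ?_⟩
  rw [hs, ← Finset.sum_sub_distrib]
  have hterm : ∀ k : Fin d, ‖∏ j, z j ^ b k j - e2 ((((w ^ (k : ℕ)).val * y.val : ℕ) : ℝ) / q)‖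
      ≤ (2 * Real.pi * ∑ j, |(b k j : ℝ)| * (d.totient * K)) / M := by
    intro k
    have h1 : e2 ((((w ^ (k : ℕ)).val * y.val : ℕ) : ℝ) / q)
        = e2 (((∑ j, b k j * N j : ℤ) : ℝ) / q) := by
      have := e2_congr q hq.pos (((w ^ (k : ℕ)).val * y.val : ℕ) : ℤ) (∑ j, b k j * N j) (by
        push_cast
        rw [ZMod.natCast_val, ZMod.natCast_val, ZMod.cast_id, ZMod.cast_id]
        simp only [hN]
        rw [Bc_eval q d hd w hw, Finset.sum_mul]
        refine Finset.sum_congr rfl fun j _ => ?_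
        rw [hbB]; ring)
      rw [← this, Int.cast_natCast]
    rw [h1]
    simp_rw [hθ]
    rw [e2_sum]
    refine (e2_lip _ _).trans ?_
    rw [mul_div_assoc]
    refine mul_le_mul_of_nonneg_left ?_ Real.two_pi_pos.le
    push_cast
    rw [Finset.sum_div, ← Finset.sum_sub_distrib, Finset.sum_div]
    refine (Finset.abs_sum_le_sum_abs _ _).trans (Finset.sum_le_sum fun j _ => ?_)
    rw [mul_div_assoc, mul_div_assoc, ← mul_sub, abs_mul]
    exact mul_le_mul_of_nonneg_left (hNb j) (abs_nonneg _)
  refine (norm_sum_le _ _).trans_lt ((Finset.sum_le_sum fun k _ => hterm k).trans_lt ?_)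
  rw [← Finset.sum_div, ← hT, div_lt_iff₀ hM0]
  rw [div_lt_iff₀ hε] at hM
  linarith
end
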